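/- Phragmén–Lindelöf theorem for sectors (Banach-space-valued): Let X be a complex Banach space. Let 0 < θ and let W be the closed angular sector {z ∈ ℂ : z = 0 or arg z ∈ [φ₀ − θ/2, φ₀ + θ/2]} of angular extent θ (contained in the plane, with vertex at the origin). Let f : W → X be holomorphic in the interior of W and continuous on W. Suppose ‖f(z)‖ ≤ C for all z on the two boundary half-lines of W, and suppose there exist constants α, β and γ with 0 < γ < π/θ such that ‖f(z)‖ ≤ α · exp(β · |z|^γ) for all z ∈ W. Then ‖f(z)‖ ≤ C for all z ∈ W. -/

import Mathlib

noncomputable section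

/-- The closed angular sector with vertex at the origin, bisecting direction `φ₀`, and
angular extent `θ`: the set of points `r · exp(i φ)` with `r ≥ 0` and
`φ ∈ [φ₀ - θ/2, φ₀ + θ/2]`. -/
def angularSector (φ₀ θ : ℝ) : Set ℂ :=
  {z : ℂ | ∃ r φ : ℝ, 0 ≤ r ∧ φ₀ - θ / 2 ≤ φ ∧ φ ≤ φ₀ + θ / 2 ∧
    z = (r : ℂ) * Complex.exp ((φ : ℂ) * Complex.I)}

/-- **Phragmén–Lindelöf theorem for sectors** (Banach-space-valued).
Let `W` be the closed sector of angular extent `θ > 0` with vertex at the origin, and let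
`f` be holomorphic in the interior of `W`, continuous on `W`, bounded by `C` on the two
boundary half-lines of `W`, and of growth at most `α · exp (β · |z|^γ)` on `W` for some
`0 < γ < π/θ`. Then `‖f z‖ ≤ C` throughout `W`. -/
theorem phragmen_lindelof_sector
    {X : Type*} [NormedAddCommGroup X] [NormedSpace ℂ X] [CompleteSpace X]
    (φ₀ θ : ℝ) (hθ : 0 < θ) (f : ℂ → X)
    (hdiff : DifferentiableOn ℂ f (interior (angularSector φ₀ θ)))
    (hcont : ContinuousOn f (angularSector φ₀ θ))
    (C : ℝ)
    (hedge : ∀ r : ℝ, 0 ≤ r →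
      ‖f ((r : ℂ) * Complex.exp (((φ₀ - θ / 2 : ℝ) : ℂ) * Complex.I))‖ ≤ C ∧
      ‖f ((r : ℂ) * Complex.exp (((φ₀ + θ / 2 : ℝ) : ℂ) * Complex.I))‖ ≤ C)
    (α β γ : ℝ) (hγ0 : 0 < γ) (hγ : γ < Real.pi / θ)
    (hgrowth : ∀ z ∈ angularSector φ₀ θ, ‖f z‖ ≤ α * Real.exp (β * ‖z‖ ^ γ)) :
    ∀ z ∈ angularSector φ₀ θ, ‖f z‖ ≤ C := by
  have hmem : ∀ w : ℂ, φ₀ - θ / 2 ≤ w.im → w.im ≤ φ₀ + θ / 2 →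
      Complex.exp w ∈ angularSector φ₀ θ := by
    intro w h1 h2
    refine ⟨Real.exp w.re, w.im, (Real.exp_pos _).le, h1, h2, ?_⟩
    rw [Complex.ofReal_exp, ← Complex.exp_add, Complex.re_add_im]
  have hopen : IsOpen (Complex.im ⁻¹' Set.Ioo (φ₀ - θ / 2) (φ₀ + θ / 2)) :=
    isOpen_Ioo.preimage Complex.continuous_im
  have hint : Set.MapsTo Complex.exp (Complex.im ⁻¹' Set.Ioo (φ₀ - θ / 2) (φ₀ + θ / 2))
      (interior (angularSector φ₀ θ)) := by
    intro w hw
    refine interior_maximal ?_ (Complex.isOpenMap_exp _ hopen) (Set.mem_image_of_mem _ hw)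
    rintro _ ⟨v, hv, rfl⟩
    exact hmem v hv.1.le hv.2.le
  have hd : DiffContOnCl ℂ (fun w => f (Complex.exp w))
      (Complex.im ⁻¹' Set.Ioo (φ₀ - θ / 2) (φ₀ + θ / 2)) := by
    refine ⟨hdiff.comp Complex.differentiable_exp.differentiableOn hint, ?_⟩
    refine hcont.comp Complex.continuous_exp.continuousOn ?_
    intro w hw
    have hw' : w ∈ Complex.im ⁻¹' Set.Icc (φ₀ - θ / 2) (φ₀ + θ / 2) :=
      closure_minimal (Set.preimage_mono Set.Ioo_subset_Icc_self)
        (isClosed_Icc.preimage Complex.continuous_im) hw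
    exact hmem w hw'.1 hw'.2
  have hexp : ∀ (w : ℂ) (φ : ℝ), w.im = φ →
      Complex.exp w = (Real.exp w.re : ℂ) * Complex.exp ((φ : ℂ) * Complex.I) := by
    rintro w _ rfl
    rw [Complex.ofReal_exp, ← Complex.exp_add, Complex.re_add_im]
  rintro z ⟨r, φ, hr, h1, h2, rfl⟩
  rcases hr.eq_or_lt with rfl | hr
  · simpa using (hedge 0 le_rfl).1
  have key := PhragmenLindelof.horizontal_strip (C := C)
    (z := (Real.log r : ℂ) + (φ : ℂ) * Complex.I) hd ?_ ?_ ?_ (by simpa using h1)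
    (by simpa using h2)
  · simpa [Complex.exp_add, ← Complex.ofReal_exp, Real.exp_log hr] using key
  · refine ⟨γ, by convert hγ using 2; ring, |β|, Asymptotics.IsBigO.of_bound |α| ?_⟩
    refine Filter.Eventually.filter_mono inf_le_right ?_
    rw [Filter.eventually_principal]
    intro w hw
    refine (hgrowth _ (hmem w hw.1.le hw.2.le)).trans ?_
    rw [Complex.norm_exp, ← Real.exp_mul, Real.norm_eq_abs, Real.abs_exp, mul_comm w.re γ]
    have hb : β * Real.exp (γ * w.re) ≤ |β| * Real.exp (γ * |w.re|) := by
      gcongr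
      · exact le_abs_self β
      · exact le_abs_self _
    exact mul_le_mul (le_abs_self α) (Real.exp_le_exp.2 hb) (Real.exp_pos _).le (abs_nonneg α)
  · intro w hw
    rw [hexp w _ hw]
    exact (hedge _ (Real.exp_pos _).le).1
  · intro w hw
    rw [hexp w _ hw]
    exact (hedge _ (Real.exp_pos _).le).2
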